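/- Non-asymptotic AEP lower bound for the smoothed max-relative entropy: Let ρ, σ be states on ℂ^d, γ ∈ (0,1] with c_γ(ρ‖σ) < ∞, ε ∈ (0,1) and n ≥ 1. Then (1/n) · D_max^ε(ρ^{⊗n}‖σ^{⊗n}) ≥ D(ρ‖σ) − (4·c_γ(ρ‖σ)/√n) · log(2/(1−ε)). -/

import Mathlib

open scoped Kronecker ComplexOrder

noncomputable section

namespace QCD

attribute [local instance] Classical.propDecidable

variable {n m : Type} [Fintype n] [DecidableEq n] [Fintype m] [DecidableEq m]

/-- The real part of the trace of a complex matrix. -/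
def rtr (A : Matrix n n ℂ) : ℝ := (A.trace).re

/-- A quantum state: positive semidefinite with trace one. -/
def IsState (ρ : Matrix n n ℂ) : Prop := ρ.PosSemidef ∧ ρ.trace = 1

/-- Loewner order: `A ≤ B` iff `B - A` is positive semidefinite. -/
def loewnerLE (A B : Matrix n n ℂ) : Prop := (B - A).PosSemidef

/-- Support containment (for PSD matrices): `ker σ ⊆ ker ρ`. -/
def SuppLE (ρ σ : Matrix n n ℂ) : Prop := ∀ v : n → ℂ, σ.mulVec v = 0 → ρ.mulVec v = 0

/-- Functional calculus for Hermitian matrices (junk value `0` otherwise). -/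
def matFun (f : ℝ → ℝ) (A : Matrix n n ℂ) : Matrix n n ℂ :=
  if hA : A.IsHermitian then
    (hA.eigenvectorUnitary : Matrix n n ℂ) *
      Matrix.diagonal (fun i => (f (hA.eigenvalues i) : ℂ)) *
      (star (hA.eigenvectorUnitary : Matrix n n ℂ))
  else 0

/-- Matrix square root via functional calculus. -/
def msqrt (A : Matrix n n ℂ) : Matrix n n ℂ := matFun Real.sqrt A

/-- Matrix real power taken on the support (`0 ^ t := 0`). -/
def mpow (A : Matrix n n ℂ) (t : ℝ) : Matrix n n ℂ :=
  matFun (fun x => if x = 0 then 0 else x ^ t) A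

/-- Matrix base-2 logarithm on the support. -/
def mlog (A : Matrix n n ℂ) : Matrix n n ℂ := matFun (Real.logb 2) A

/-- Positive part of a Hermitian matrix. -/
def mposPart (A : Matrix n n ℂ) : Matrix n n ℂ := matFun (fun x => max x 0) A

/-- Trace norm. -/
def traceNorm (A : Matrix n m ℂ) : ℝ := rtr (msqrt (A.conjTranspose * A))

/-- Base-2 logarithm as an extended real (`⊥` on nonpositive input). -/
def elog (x : ℝ) : EReal := if x ≤ 0 then ⊥ else ((Real.logb 2 x : ℝ) : EReal)

/-- Base-2 logarithm of an extended real. -/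
def elogE (x : EReal) : EReal := if x = ⊤ then ⊤ else elog x.toReal

/-- `2 ^ x` for an extended real `x`. -/
def epow2 (x : EReal) : EReal :=
  if x = ⊤ then ⊤ else if x = ⊥ then 0 else ((((2:ℝ) ^ x.toReal : ℝ)) : EReal)

/-- Umegaki relative entropy (base 2), `⊤` if the support condition fails. -/
def relEntropy (ρ σ : Matrix n n ℂ) : EReal :=
  if SuppLE ρ σ then ((rtr (ρ * (mlog ρ - mlog σ)) : ℝ) : EReal) else ⊤

/-- Petz–Rényi divergence (base 2). -/
def petzRenyi (α : ℝ) (ρ σ : Matrix n n ℂ) : EReal :=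
  if 1 < α ∧ ¬ SuppLE ρ σ then ⊤
  else (((α - 1)⁻¹ : ℝ) : EReal) * elog (rtr (mpow ρ α * mpow σ (1 - α)))

/-- Geometric (maximal) Rényi divergence (base 2). -/
def geomRenyi (α : ℝ) (ρ σ : Matrix n n ℂ) : EReal :=
  if SuppLE ρ σ then
    (((α - 1)⁻¹ : ℝ) : EReal) *
      elog (rtr (σ * mpow (mpow σ (-(1/2 : ℝ)) * ρ * mpow σ (-(1/2 : ℝ))) α))
  else ⊤

/-- Max-relative entropy (base 2). -/
def dMax (ρ σ : Matrix n n ℂ) : EReal :=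
  sInf {x : EReal | ∃ lam : ℝ, x = (lam : EReal) ∧ loewnerLE ρ ((((2:ℝ) ^ lam : ℝ) : ℂ) • σ)}

/-- Uhlmann fidelity. -/
def fidelity (ρ σ : Matrix n n ℂ) : ℝ := (rtr (msqrt (msqrt σ * ρ * msqrt σ))) ^ 2

/-- Sine (purified) distance. -/
def sineDist (ρ σ : Matrix n n ℂ) : ℝ := Real.sqrt (1 - fidelity ρ σ)

/-- Smoothed max-relative entropy: smoothing over states in the sine-distance ball. -/
def dMaxSmooth (δ : ℝ) (ρ σ : Matrix n n ℂ) : EReal :=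
  ⨅ (ρ' : Matrix n n ℂ) (_ : IsState ρ' ∧ sineDist ρ ρ' ≤ δ), dMax ρ' σ

/-- Hypothesis testing divergence (base 2). -/
def dH (ε : ℝ) (ρ σ : Matrix n n ℂ) : EReal :=
  - elog (sInf {x : ℝ | ∃ T : Matrix n n ℂ,
      T.PosSemidef ∧ ((1 : Matrix n n ℂ) - T).PosSemidef ∧ 1 - ε ≤ rtr (T * ρ) ∧ x = rtr (T * σ)})

/-- The quantity `c_γ(ρ‖σ)`. -/
def cGamma (γ : ℝ) (ρ σ : Matrix n n ℂ) : EReal :=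
  ((γ⁻¹ : ℝ) : EReal) *
    elogE (epow2 ((γ : ℝ) * petzRenyi (1 + γ) ρ σ) +
           epow2 (((-γ : ℝ) : EReal) * petzRenyi (1 - γ) ρ σ) + 1)

/-- Binary entropy (base 2). -/
def binEnt (x : ℝ) : ℝ := -(x * Real.logb 2 x) - (1 - x) * Real.logb 2 (1 - x)

/-- Action of `id_k ⊗ Φ` on block matrices. -/
def blockApply {k : Type} (Φ : Matrix n n ℂ →ₗ[ℂ] Matrix m m ℂ)
    (M : Matrix (k × n) (k × n) ℂ) : Matrix (k × m) (k × m) ℂ :=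
  Matrix.of fun p q => Φ (Matrix.of fun a b => M (p.1, a) (q.1, b)) p.2 q.2

/-- Action of `Φ ⊗ id_k` on block matrices. -/
def blockApplyRight {k : Type} (Φ : Matrix n n ℂ →ₗ[ℂ] Matrix m m ℂ)
    (M : Matrix (n × k) (n × k) ℂ) : Matrix (m × k) (m × k) ℂ :=
  Matrix.of fun p q => Φ (Matrix.of fun a b => M (a, p.2) (b, q.2)) p.1 q.1

/-- Quantum channel: trace preserving and completely positive. -/
def IsQChannel (Φ : Matrix n n ℂ →ₗ[ℂ] Matrix m m ℂ) : Prop :=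
  (∀ M : Matrix n n ℂ, (Φ M).trace = M.trace) ∧
  (∀ k : ℕ, 1 ≤ k → ∀ M : Matrix (Fin k × n) (Fin k × n) ℂ, M.PosSemidef →
    (blockApply Φ M).PosSemidef)

/-- `id_k ⊗ Φ` as a linear map. -/
def blockApplyL (k : Type) (Φ : Matrix n n ℂ →ₗ[ℂ] Matrix m m ℂ) :
    Matrix (k × n) (k × n) ℂ →ₗ[ℂ] Matrix (k × m) (k × m) ℂ where
  toFun := blockApply Φ
  map_add' M N := by
    ext p q
    show Φ (Matrix.of fun a b => (M + N) (p.1, a) (q.1, b)) p.2 q.2 = _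
    have h : (Matrix.of fun a b => (M + N) (p.1, a) (q.1, b)) =
        (Matrix.of fun a b => M (p.1, a) (q.1, b)) +
          (Matrix.of fun a b => N (p.1, a) (q.1, b)) := rfl
    rw [h, map_add]
    rfl
  map_smul' c M := by
    ext p q
    show Φ (Matrix.of fun a b => (c • M) (p.1, a) (q.1, b)) p.2 q.2 = _
    have h : (Matrix.of fun a b => (c • M) (p.1, a) (q.1, b)) =
        c • (Matrix.of fun a b => M (p.1, a) (q.1, b)) := rfl
    rw [h, map_smul]
    rfl

/-- `Φ ⊗ id_k` as a linear map. -/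
def blockApplyRightL (k : Type) (Φ : Matrix n n ℂ →ₗ[ℂ] Matrix m m ℂ) :
    Matrix (n × k) (n × k) ℂ →ₗ[ℂ] Matrix (m × k) (m × k) ℂ where
  toFun := blockApplyRight Φ
  map_add' M N := by
    ext p q
    show Φ (Matrix.of fun a b => (M + N) (a, p.2) (b, q.2)) p.1 q.1 = _
    have h : (Matrix.of fun a b => (M + N) (a, p.2) (b, q.2)) =
        (Matrix.of fun a b => M (a, p.2) (b, q.2)) +
          (Matrix.of fun a b => N (a, p.2) (b, q.2)) := rfl
    rw [h, map_add]
    rfl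
  map_smul' c M := by
    ext p q
    show Φ (Matrix.of fun a b => (c • M) (a, p.2) (b, q.2)) p.1 q.1 = _
    have h : (Matrix.of fun a b => (c • M) (a, p.2) (b, q.2)) =
        c • (Matrix.of fun a b => M (a, p.2) (b, q.2)) := rfl
    rw [h, map_smul]
    rfl

/-- Tensor product of two channels (Kronecker product action). -/
def tensorChannel {n₁ m₁ n₂ m₂ : Type}
    (E₁ : Matrix n₁ n₁ ℂ →ₗ[ℂ] Matrix m₁ m₁ ℂ) (E₂ : Matrix n₂ n₂ ℂ →ₗ[ℂ] Matrix m₂ m₂ ℂ) :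
    Matrix (n₁ × n₂) (n₁ × n₂) ℂ →ₗ[ℂ] Matrix (m₁ × m₂) (m₁ × m₂) ℂ :=
  (blockApplyRightL m₂ E₁).comp (blockApplyL n₁ E₂)

/-- Index type for `k`-fold tensor powers. -/
def tpow (ι : Type) : ℕ → Type
  | 0 => PUnit
  | (k+1) => tpow ι k × ι

def tpowFintype (ι : Type) [Fintype ι] : ∀ k : ℕ, Fintype (tpow ι k)
  | 0 => inferInstanceAs (Fintype PUnit)
  | (k+1) => letI := tpowFintype ι k; inferInstanceAs (Fintype (tpow ι k × ι))

instance (ι : Type) [Fintype ι] (k : ℕ) : Fintype (tpow ι k) := tpowFintype ι k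

def tpowDecEq (ι : Type) [DecidableEq ι] : ∀ k : ℕ, DecidableEq (tpow ι k)
  | 0 => inferInstanceAs (DecidableEq PUnit)
  | (k+1) => letI := tpowDecEq ι k; inferInstanceAs (DecidableEq (tpow ι k × ι))

instance (ι : Type) [DecidableEq ι] (k : ℕ) : DecidableEq (tpow ι k) := tpowDecEq ι k

/-- `k`-fold Kronecker tensor power of a matrix. -/
def tpowMat (ρ : Matrix n n ℂ) : ∀ k : ℕ, Matrix (tpow n k) (tpow n k) ℂ
  | 0 => 1
  | (k+1) => (tpowMat ρ k) ⊗ₖ ρ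

/-- `k`-fold tensor power of a channel. -/
def tpowChannel (Φ : Matrix n n ℂ →ₗ[ℂ] Matrix m m ℂ) :
    ∀ k : ℕ, Matrix (tpow n k) (tpow n k) ℂ →ₗ[ℂ] Matrix (tpow m k) (tpow m k) ℂ
  | 0 => LinearMap.id
  | (k+1) => tensorChannel (tpowChannel Φ k) Φ

/-- Channel divergence induced by a divergence `𝔇` on states:
sup over `k ≥ 1` and input states `ν` on `ℂ^k ⊗ ℂ^d`. -/
def chDiv (𝔇 : ∀ (p : Type) [Fintype p] [DecidableEq p], Matrix p p ℂ → Matrix p p ℂ → EReal)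
    (E F : Matrix n n ℂ →ₗ[ℂ] Matrix m m ℂ) : EReal :=
  ⨆ (k : ℕ) (_ : 1 ≤ k) (ν : Matrix (Fin k × n) (Fin k × n) ℂ) (_ : IsState ν),
    𝔇 (Fin k × m) (blockApply E ν) (blockApply F ν)

/-- The geometric Rényi divergence as a divergence family. -/
def geomD (α : ℝ) : ∀ (p : Type) [Fintype p] [DecidableEq p],
    Matrix p p ℂ → Matrix p p ℂ → EReal :=
  fun _ _ _ => geomRenyi α

/-- The Umegaki relative entropy as a divergence family. -/
def relD : ∀ (p : Type) [Fintype p] [DecidableEq p],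
    Matrix p p ℂ → Matrix p p ℂ → EReal :=
  fun _ _ _ => relEntropy

/-- The hypothesis testing divergence as a divergence family. -/
def dHD (ε : ℝ) : ∀ (p : Type) [Fintype p] [DecidableEq p],
    Matrix p p ℂ → Matrix p p ℂ → EReal :=
  fun _ _ _ => dH ε

/-- Regularized channel relative entropy. -/
def regRelEntropy (E F : Matrix n n ℂ →ₗ[ℂ] Matrix m m ℂ) : EReal :=
  ⨆ (k : ℕ) (_ : 1 ≤ k),
    (((k : ℝ)⁻¹ : ℝ) : EReal) * chDiv relD (tpowChannel E k) (tpowChannel F k)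

end QCD

/-!
The fidelity is a trace norm, `F(ρ, ω) = ‖√ρ √ω‖₁²`. If `ω ≤ 2 ^ lam • σ`, insert between `√ρ` and
`√ω` the operator `T = ∑ |uᵢ⟩⟨uᵢ|vⱼ⟩⟨vⱼ|` over the pairs of eigenvectors of `ρ` and `σ` with
`pᵢ ≥ τ * qⱼ` (a likelihood-ratio test for the Nussbaum–Szkoła distributions of the pair). The part
with `1 - T` is at most `√(τ ^ s * Q)`, where `Q = Tr[ρ^(1-s) σ^s]`, and the part with `T` at most
`√(2 ^ lam / τ)`. As `ω` is `ε`-close to `ρ`, the sum exceeds `1 - ε`; optimising `τ` yields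
`D_max^ε(ρ‖σ) ≥ D_{1-s}(ρ‖σ) - 2 * (1 + s⁻¹) * log (2 / (1 - ε))`.

The quantity `Q` is multiplicative under tensor powers, so it remains to bound `D_{1-s}(ρ‖σ)` below
by `D(ρ‖σ) - O(s)`. This is a moment estimate for the log-likelihood ratio `Z`: since
`u ↦ cosh (y * arcosh u)` is concave on `[1, ∞)` for `0 ≤ y ≤ 1`, the mean of `cosh (y * γ * Z)` is
controlled by the mean of `cosh (γ * Z)`, that is, by `c_γ(ρ‖σ)`. Taking `s` of order
`1 / (c_γ * √n)` balances the two errors.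
-/

namespace QCD

section Hyperbolic

open Real

lemma convexOn_sinh_Ici : ConvexOn ℝ (Set.Ici 0) sinh := by
  refine MonotoneOn.convexOn_of_deriv (convex_Ici 0) continuous_sinh.continuousOn
    differentiable_sinh.differentiableOn ?_
  rw [interior_Ici, Real.deriv_sinh]
  intro x hx z hz hxz
  rw [cosh_le_cosh, abs_of_pos hx, abs_of_pos hz]
  exact hxz

lemma sinh_mul_le {t x : ℝ} (ht : t ∈ Set.Icc 0 1) (hx : 0 ≤ x) : sinh (t * x) ≤ t * sinh x := by
  simpa using convexOn_sinh_Ici.2 (Set.mem_Ici.2 hx) (Set.mem_Ici.2 le_rfl) ht.1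
    (sub_nonneg.2 ht.2) (add_sub_cancel t 1)

lemma cosh_sub_one_eq_two_mul_sinh_sq (x : ℝ) : cosh x - 1 = 2 * sinh (x / 2) ^ 2 := by
  have h := cosh_two_mul (x / 2)
  rw [mul_div_cancel₀ x two_ne_zero, cosh_sq] at h
  linarith

lemma cosh_mul_sub_one_le {t x : ℝ} (ht : t ∈ Set.Icc 0 1) (hx : 0 ≤ x) :
    cosh (t * x) - 1 ≤ t ^ 2 * (cosh x - 1) := by
  have hsinh : sinh (t * (x / 2)) ≤ t * sinh (x / 2) := sinh_mul_le ht (by positivity)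
  have hnonneg : 0 ≤ sinh (t * (x / 2)) := sinh_nonneg_iff.2 (mul_nonneg ht.1 (by positivity))
  rw [cosh_sub_one_eq_two_mul_sinh_sq, cosh_sub_one_eq_two_mul_sinh_sq, mul_div_assoc]
  nlinarith [pow_le_pow_left₀ hnonneg hsinh 2]

-- By the product formulas this compares `sinh` at `(1 - y) * x` and at `(1 + y) * x`.
lemma mul_cosh_mul_sinh_le {y x : ℝ} (hy : y ∈ Set.Icc 0 1) (hx : 0 ≤ x) :
    y * cosh (y * x) * sinh x ≤ sinh (y * x) * cosh x := by
  obtain ⟨hy0, hy1⟩ := hy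
  have hpos : 0 < 1 + y := by linarith
  have h : sinh ((1 - y) / (1 + y) * ((1 + y) * x)) ≤ (1 - y) / (1 + y) * sinh ((1 + y) * x) :=
    sinh_mul_le ⟨div_nonneg (by linarith) hpos.le, (div_le_one hpos).2 (by linarith)⟩
      (mul_nonneg hpos.le hx)
  rw [← mul_assoc, div_mul_cancel₀ _ hpos.ne', div_mul_eq_mul_div, le_div_iff₀ hpos, sub_mul,
    add_mul, one_mul, sinh_sub, sinh_add] at h
  linarith

lemma hasDerivAt_cosh_mul_arcosh (y : ℝ) {u : ℝ} (hu : 1 < u) :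
    HasDerivAt (fun v => cosh (y * arcosh v)) (y * (sinh (y * arcosh u) / sinh (arcosh u))) u := by
  convert ((hasDerivAt_arcosh hu).const_mul y).cosh using 1
  rw [sinh_arcosh hu.le]
  ring

lemma antitoneOn_sinh_mul_div_sinh {y : ℝ} (hy : y ∈ Set.Icc 0 1) :
    AntitoneOn (fun x => sinh (y * x) / sinh x) (Set.Ioi 0) := by
  have hderiv : ∀ x ∈ Set.Ioi (0 : ℝ), HasDerivAt (fun x => sinh (y * x) / sinh x)
      ((y * cosh (y * x) * sinh x - sinh (y * x) * cosh x) / sinh x ^ 2) x := fun x hx =>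
    (((hasDerivAt_id x).const_mul y).sinh.div (hasDerivAt_sinh x)
      (sinh_pos_iff.2 hx).ne').congr_deriv (by simp only [id_eq, mul_one, mul_comm])
  refine antitoneOn_of_deriv_nonpos (convex_Ioi 0)
    (fun x hx => (hderiv x hx).continuousAt.continuousWithinAt) ?_ ?_ <;> rw [interior_Ioi]
  · exact fun x hx => (hderiv x hx).differentiableAt.differentiableWithinAt
  · intro x hx
    rw [(hderiv x hx).deriv]
    exact div_nonpos_of_nonpos_of_nonneg
      (sub_nonpos.2 (mul_cosh_mul_sinh_le hy (le_of_lt hx))) (sq_nonneg _)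

lemma concaveOn_cosh_mul_arcosh {y : ℝ} (hy : y ∈ Set.Icc 0 1) :
    ConcaveOn ℝ (Set.Ici 1) (fun u => cosh (y * arcosh u)) := by
  refine AntitoneOn.concaveOn_of_deriv (convex_Ici 1)
    (continuous_cosh.comp_continuousOn (continuousOn_arcosh.const_mul y)) ?_ ?_ <;>
    rw [interior_Ici]
  · exact fun u hu => (hasDerivAt_cosh_mul_arcosh y hu).differentiableAt.differentiableWithinAt
  · intro u hu v hv huv
    rw [(hasDerivAt_cosh_mul_arcosh y hu).deriv, (hasDerivAt_cosh_mul_arcosh y hv).deriv]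
    exact mul_le_mul_of_nonneg_left (antitoneOn_sinh_mul_div_sinh hy (arcosh_pos hu)
      (arcosh_pos hv) ((arcosh_le_arcosh (zero_lt_one.trans hu) (zero_lt_one.trans hv)).2 huv)) hy.1

lemma cosh_mul_arcosh_cosh (y x : ℝ) : cosh (y * arcosh (cosh x)) = cosh (y * x) := by
  rw [← cosh_abs x, arcosh_cosh (abs_nonneg x)]
  rcases abs_choice x with h | h <;> rw [h]
  rw [mul_neg, cosh_neg]

variable {ι : Type*} [Fintype ι] {w W : ι → ℝ} {y k : ℝ}

lemma sum_mul_cosh_mul_le (hw : ∀ i, 0 ≤ w i) (hsum : ∑ i, w i = 1) (hk : 0 ≤ k)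
    (hW : ∑ i, w i * cosh (W i) ≤ cosh k) (hy : y ∈ Set.Icc 0 1) :
    ∑ i, w i * cosh (y * W i) ≤ cosh (y * k) := by
  have hone : 1 ≤ ∑ i, w i * cosh (W i) := by
    rw [← hsum]
    exact Finset.sum_le_sum fun i _ => le_mul_of_one_le_right (hw i) (one_le_cosh _)
  calc ∑ i, w i * cosh (y * W i)
      ≤ cosh (y * arcosh (∑ i, w i * cosh (W i))) := by
        simpa [cosh_mul_arcosh_cosh] using (concaveOn_cosh_mul_arcosh hy).le_map_sum
          (t := Finset.univ) (p := fun i => cosh (W i)) (fun i _ => hw i) hsum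
          (fun i _ => one_le_cosh (W i))
    _ ≤ cosh (y * k) := by
        have harcosh : arcosh (∑ i, w i * cosh (W i)) ≤ k := by
          rw [← arcosh_cosh hk]
          exact (arcosh_le_arcosh (by positivity) (by positivity)).2 hW
        rw [cosh_le_cosh, abs_of_nonneg (mul_nonneg hy.1 (arcosh_nonneg hone)),
          abs_of_nonneg (mul_nonneg hy.1 hk)]
        exact mul_le_mul_of_nonneg_left harcosh hy.1

lemma sum_mul_exp_neg_mul_le (hw : ∀ i, 0 ≤ w i) (hsum : ∑ i, w i = 1) (hk : 0 ≤ k)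
    (hW : ∑ i, w i * cosh (W i) ≤ cosh k) (hy : y ∈ Set.Icc 0 1) :
    ∑ i, w i * exp (-(y * W i)) ≤ exp (-(y * ∑ i, w i * W i) + 2 * (cosh (y * k) - 1)) := by
  have hexp : ∀ z : ℝ, exp (-z) ≤ 2 * cosh z - 1 - z := fun z => by
    have := add_one_le_exp z
    rw [cosh_eq]
    linarith
  calc ∑ i, w i * exp (-(y * W i))
      ≤ ∑ i, w i * (2 * cosh (y * W i) - 1 - y * W i) :=
        Finset.sum_le_sum fun i _ => mul_le_mul_of_nonneg_left (hexp _) (hw i)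
    _ = 2 * ∑ i, w i * cosh (y * W i) - ∑ i, w i - y * ∑ i, w i * W i := by
        simp only [Finset.mul_sum, ← Finset.sum_sub_distrib]
        exact Finset.sum_congr rfl fun i _ => by ring
    _ ≤ -(y * ∑ i, w i * W i) + 2 * (cosh (y * k) - 1) + 1 := by
        linarith [sum_mul_cosh_mul_le hw hsum hk hW hy]
    _ ≤ exp (-(y * ∑ i, w i * W i) + 2 * (cosh (y * k) - 1)) := add_one_le_exp _

end Hyperbolic

section SpectralCalculus

variable {N : Type} [Fintype N] [DecidableEq N]

/-- The Hermitian matrix with eigenvector columns `U` and real eigenvalues `p`. -/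
def spectralMatrix (U : Matrix.unitaryGroup N ℂ) (p : N → ℝ) : Matrix N N ℂ :=
  U * Matrix.diagonal (fun i => (p i : ℂ)) * star (U : Matrix N N ℂ)

lemma star_unitary_mul_cancel (U : Matrix.unitaryGroup N ℂ) (A : Matrix N N ℂ) :
    star (U : Matrix N N ℂ) * (U * A) = A := by
  rw [← mul_assoc, Unitary.coe_star_mul_self, one_mul]

lemma spectralMatrix_mul (U : Matrix.unitaryGroup N ℂ) (p q : N → ℝ) :
    spectralMatrix U p * spectralMatrix U q = spectralMatrix U (p * q) := by
  simp only [spectralMatrix, mul_assoc, star_unitary_mul_cancel]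
  rw [← mul_assoc (Matrix.diagonal _), Matrix.diagonal_mul_diagonal]
  simp only [Pi.mul_apply, Complex.ofReal_mul]

lemma isHermitian_spectralMatrix (U : Matrix.unitaryGroup N ℂ) (p : N → ℝ) :
    (spectralMatrix U p).IsHermitian := by
  refine Matrix.isHermitian_mul_mul_conjTranspose _ ?_
  rw [Matrix.isHermitian_diagonal_iff]
  exact fun i => Complex.conj_ofReal (p i)

lemma rtr_spectralMatrix (U : Matrix.unitaryGroup N ℂ) (p : N → ℝ) :
    rtr (spectralMatrix U p) = ∑ i, p i := by
  rw [rtr, spectralMatrix, Matrix.trace_mul_comm, ← mul_assoc, Unitary.coe_star_mul_self, one_mul,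
    Matrix.trace_diagonal, Complex.re_sum]
  simp only [Complex.ofReal_re]

variable {A : Matrix N N ℂ}

lemma spectralMatrix_eigenvalues (hA : A.IsHermitian) :
    spectralMatrix hA.eigenvectorUnitary hA.eigenvalues = A :=
  hA.spectral_theorem.symm

lemma matFun_eq_spectralMatrix (hA : A.IsHermitian) (f : ℝ → ℝ) :
    matFun f A = spectralMatrix hA.eigenvectorUnitary (f ∘ hA.eigenvalues) :=
  dif_pos hA

lemma spectralMatrix_eq_spectralMatrix_iff (U V : Matrix.unitaryGroup N ℂ) (p q : N → ℝ) :
    spectralMatrix U p = spectralMatrix V q ↔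
      ∀ i j, p i * (star (U : Matrix N N ℂ) * V) i j = (star (U : Matrix N N ℂ) * V) i j * q j := by
  have hU' (X : Matrix N N ℂ) : (U : Matrix N N ℂ) * (star (U : Matrix N N ℂ) * X) = X := by
    rw [← mul_assoc, Unitary.mul_star_self_of_mem U.2, one_mul]
  have hV : star (V : Matrix N N ℂ) * V = 1 := Unitary.coe_star_mul_self V
  have hV' : (V : Matrix N N ℂ) * star (V : Matrix N N ℂ) = 1 := Unitary.coe_mul_star_self V
  have hintertwine : spectralMatrix U p = spectralMatrix V q ↔
      Matrix.diagonal (fun i => (p i : ℂ)) * (star (U : Matrix N N ℂ) * V) =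
        star (U : Matrix N N ℂ) * V * Matrix.diagonal (fun j => (q j : ℂ)) := by
    constructor <;> intro h
    · simpa only [spectralMatrix, mul_assoc, star_unitary_mul_cancel, hV, mul_one] using
        congrArg (star (U : Matrix N N ℂ) * · * (V : Matrix N N ℂ)) h
    · simpa only [spectralMatrix, mul_assoc, hU', hV', mul_one] using
        congrArg ((U : Matrix N N ℂ) * · * star (V : Matrix N N ℂ)) h
  simp only [hintertwine, ← Matrix.ext_iff, Matrix.diagonal_mul, Matrix.mul_diagonal]

-- `p i = q j` wherever the overlap of the two eigenbases is nonzero.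
lemma matFun_spectralMatrix (U : Matrix.unitaryGroup N ℂ) (p : N → ℝ) (f : ℝ → ℝ) :
    matFun f (spectralMatrix U p) = spectralMatrix U (f ∘ p) := by
  have hA := isHermitian_spectralMatrix U p
  rw [matFun_eq_spectralMatrix hA, eq_comm, spectralMatrix_eq_spectralMatrix_iff]
  intro i j
  have h := (spectralMatrix_eq_spectralMatrix_iff _ _ _ _).1
    (spectralMatrix_eigenvalues hA).symm i j
  rw [mul_comm ((_ : Matrix N N ℂ) i j), mul_eq_mul_right_iff, Complex.ofReal_inj] at h ⊢
  exact h.imp_left (congrArg f)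

lemma rtr_matFun (hA : A.IsHermitian) (f : ℝ → ℝ) :
    rtr (matFun f A) = ∑ i, f (hA.eigenvalues i) := by
  rw [matFun_eq_spectralMatrix hA, rtr_spectralMatrix]
  rfl

lemma matFun_mul_matFun (hA : A.IsHermitian) (f g : ℝ → ℝ) :
    matFun f A * matFun g A = matFun (f * g) A := by
  simp only [matFun_eq_spectralMatrix hA, spectralMatrix_mul]
  rfl

lemma matFun_id (hA : A.IsHermitian) : matFun id A = A := by
  rw [matFun_eq_spectralMatrix hA, Function.id_comp, spectralMatrix_eigenvalues]

lemma isHermitian_matFun (hA : A.IsHermitian) (f : ℝ → ℝ) : (matFun f A).IsHermitian := by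
  rw [matFun_eq_spectralMatrix hA]
  exact isHermitian_spectralMatrix _ _

lemma matFun_congr (hA : A.PosSemidef) {f g : ℝ → ℝ} (h : Set.EqOn f g (Set.Ici 0)) :
    matFun f A = matFun g A := by
  rw [matFun_eq_spectralMatrix hA.1, matFun_eq_spectralMatrix hA.1]
  exact congrArg _ (funext fun i => h (hA.eigenvalues_nonneg i))

lemma msqrt_mul_msqrt (hA : A.PosSemidef) : msqrt A * msqrt A = A := by
  rw [msqrt, matFun_mul_matFun hA.1]
  exact (matFun_congr hA fun x hx => Real.mul_self_sqrt hx).trans (matFun_id hA.1)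

lemma isHermitian_msqrt (hA : A.IsHermitian) : (msqrt A).IsHermitian := isHermitian_matFun hA _

end SpectralCalculus

section TraceNorm

open scoped Matrix.Norms.Frobenius

variable {L M N : Type} [Fintype L] [Fintype M] [Fintype N]

lemma rtr_add (A B : Matrix N N ℂ) : rtr (A + B) = rtr A + rtr B := by
  rw [rtr, Matrix.trace_add, Complex.add_re, rtr, rtr]

lemma rtr_sub (A B : Matrix N N ℂ) : rtr (A - B) = rtr A - rtr B := by
  rw [rtr, Matrix.trace_sub, Complex.sub_re, rtr, rtr]

lemma rtr_smul (c : ℝ) (A : Matrix N N ℂ) : rtr ((c : ℂ) • A) = c * rtr A := by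
  rw [rtr, Matrix.trace_smul, smul_eq_mul, Complex.re_ofReal_mul, rtr]

lemma rtr_mul_comm (A : Matrix M N ℂ) (B : Matrix N M ℂ) : rtr (A * B) = rtr (B * A) := by
  rw [rtr, Matrix.trace_mul_comm, rtr]

lemma rtr_nonneg {A : Matrix N N ℂ} (hA : A.PosSemidef) : 0 ≤ rtr A :=
  (Complex.le_def.1 hA.trace_nonneg).1

lemma norm_sq_eq_sum (A : Matrix M N ℂ) : ‖A‖ ^ 2 = ∑ x : M × N, ‖A x.1 x.2‖ ^ 2 := by
  rw [Matrix.frobenius_norm_def, ← Real.sqrt_eq_rpow, Real.sq_sqrt (by positivity),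
    Fintype.sum_prod_type]
  simp only [Real.rpow_two]

lemma norm_sq_eq_rtr (A : Matrix M N ℂ) : ‖A‖ ^ 2 = rtr (A.conjTranspose * A) := by
  rw [norm_sq_eq_sum, Fintype.sum_prod_type_right, rtr, Matrix.trace, Complex.re_sum]
  simp only [Matrix.diag_apply, Matrix.mul_apply, Matrix.conjTranspose_apply, Complex.re_sum,
    RCLike.star_def, Complex.conj_mul', ← Complex.ofReal_pow, Complex.ofReal_re]

lemma rtr_mul_le_norm_mul_norm (A : Matrix M N ℂ) (B : Matrix N M ℂ) :
    rtr (A * B) ≤ ‖A‖ * ‖B‖ := by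
  calc rtr (A * B) = ∑ x : M × N, (A x.1 x.2 * B x.2 x.1).re := by
        simp only [rtr, Matrix.trace, Matrix.diag_apply, Matrix.mul_apply, Complex.re_sum,
          Fintype.sum_prod_type]
    _ ≤ ∑ x : M × N, ‖A x.1 x.2‖ * ‖B x.2 x.1‖ :=
        Finset.sum_le_sum fun x _ => (Complex.re_le_norm _).trans (norm_mul_le _ _)
    _ ≤ √(∑ x : M × N, ‖A x.1 x.2‖ ^ 2) * √(∑ x : M × N, ‖B x.2 x.1‖ ^ 2) :=
        Real.sum_mul_le_sqrt_mul_sqrt _ _ _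
    _ = ‖A‖ * ‖B‖ := by
        rw [← Real.sqrt_sq (norm_nonneg A), ← Real.sqrt_sq (norm_nonneg B), norm_sq_eq_sum A,
          norm_sq_eq_sum B, Fintype.sum_prod_type_right (fun x : N × M => ‖B x.1 x.2‖ ^ 2),
          Fintype.sum_prod_type (fun x : M × N => ‖B x.2 x.1‖ ^ 2)]

lemma norm_mul_le_of_partialIsometry {K : Matrix L M ℂ} (hK : K * K.conjTranspose * K = K)
    (A : Matrix M N ℂ) : ‖K * A‖ ≤ ‖A‖ := by
  have hKX (X : Matrix M N ℂ) : K * (K.conjTranspose * (K * X)) = K * X := by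
    rw [← Matrix.mul_assoc, ← Matrix.mul_assoc, hK]
  have hnorm : ‖K.conjTranspose * (K * A)‖ = ‖K * A‖ := by
    rw [← sq_eq_sq₀ (norm_nonneg _) (norm_nonneg _)]
    simp only [norm_sq_eq_rtr, Matrix.conjTranspose_mul, Matrix.conjTranspose_conjTranspose,
      Matrix.mul_assoc, hKX]
  have hsq : ‖K * A‖ ^ 2 ≤ ‖A‖ * ‖K * A‖ := by
    calc ‖K * A‖ ^ 2 = rtr (A.conjTranspose * (K.conjTranspose * (K * A))) := by
          rw [norm_sq_eq_rtr, Matrix.conjTranspose_mul, Matrix.mul_assoc]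
      _ ≤ ‖A.conjTranspose‖ * ‖K.conjTranspose * (K * A)‖ := rtr_mul_le_norm_mul_norm _ _
      _ = ‖A‖ * ‖K * A‖ := by rw [Matrix.frobenius_norm_conjTranspose, hnorm]
  by_contra! hlt
  nlinarith [norm_nonneg A]

variable [DecidableEq N]

lemma traceNorm_nonneg (A : Matrix M N ℂ) : 0 ≤ traceNorm A := by
  rw [traceNorm, msqrt, rtr_matFun (Matrix.isHermitian_conjTranspose_mul_self A)]
  positivity

-- The adjoint of the partial isometry in the polar decomposition of `Y`.
lemma exists_partialIsometry_mul_eq_msqrt (Y : Matrix M N ℂ) :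
    ∃ K : Matrix N M ℂ, K * K.conjTranspose * K = K ∧ K * Y = msqrt (Y.conjTranspose * Y) := by
  have hH : (Y.conjTranspose * Y).PosSemidef := Matrix.posSemidef_conjTranspose_mul_self Y
  set H := Y.conjTranspose * Y with hH_def
  set G := matFun (fun x => (√x)⁻¹) H
  have hG : G.conjTranspose = G := (isHermitian_matFun hH.1 _).eq
  have hGH : G * H = msqrt H := by
    conv_lhs => rw [← matFun_id hH.1]
    rw [matFun_mul_matFun hH.1, msqrt]
    congr 1 with x
    rw [Pi.mul_apply, id, mul_comm, ← div_eq_mul_inv, Real.div_sqrt]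
  have hGHGG : G * H * G * G = G := by
    rw [hGH, msqrt, matFun_mul_matFun hH.1, matFun_mul_matFun hH.1]
    congr 1 with x
    simpa only [Pi.mul_apply, inv_inv] using inv_mul_mul_self (√x)⁻¹
  refine ⟨G * Y.conjTranspose, ?_, by rw [Matrix.mul_assoc, hGH]⟩
  rw [Matrix.conjTranspose_mul, hG, Matrix.conjTranspose_conjTranspose]
  calc G * Y.conjTranspose * (Y * G) * (G * Y.conjTranspose)
      = G * H * G * G * Y.conjTranspose := by simp only [hH_def, Matrix.mul_assoc]
    _ = G * Y.conjTranspose := by rw [hGHGG]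

lemma traceNorm_mul_add_mul_le (A C : Matrix M L ℂ) (B D : Matrix L N ℂ) :
    traceNorm (A * B + C * D) ≤ ‖A‖ * ‖B‖ + ‖C‖ * ‖D‖ := by
  obtain ⟨K, hK, hKY⟩ := exists_partialIsometry_mul_eq_msqrt (A * B + C * D)
  calc traceNorm (A * B + C * D) = rtr (K * A * B) + rtr (K * C * D) := by
        rw [traceNorm, ← hKY, Matrix.mul_add, rtr_add, Matrix.mul_assoc, Matrix.mul_assoc]
    _ ≤ ‖K * A‖ * ‖B‖ + ‖K * C‖ * ‖D‖ :=
        add_le_add (rtr_mul_le_norm_mul_norm _ _) (rtr_mul_le_norm_mul_norm _ _)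
    _ ≤ ‖A‖ * ‖B‖ + ‖C‖ * ‖D‖ := by
        gcongr <;> exact norm_mul_le_of_partialIsometry hK _

end TraceNorm

section Overlap

open scoped Matrix.Norms.Frobenius

variable {N : Type} [Fintype N] [DecidableEq N] (U V : Matrix.unitaryGroup N ℂ)

/-- The operator whose matrix is `M` with respect to the orthonormal bases given by the columns of
`V` (input) and of `U` (output). -/
def ofBases (M : Matrix N N ℂ) : Matrix N N ℂ :=
  U * M * star (V : Matrix N N ℂ)

lemma ofBases_overlap : ofBases U V (star (U : Matrix N N ℂ) * V) = 1 := by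
  have hU : (U : Matrix N N ℂ) * star (U : Matrix N N ℂ) = 1 := Unitary.coe_mul_star_self U
  have hV : (V : Matrix N N ℂ) * star (V : Matrix N N ℂ) = 1 := Unitary.coe_mul_star_self V
  rw [ofBases, ← mul_assoc, hU, one_mul, hV]

lemma ofBases_sub (A B : Matrix N N ℂ) : ofBases U V (A - B) = ofBases U V A - ofBases U V B := by
  simp only [ofBases, mul_sub, sub_mul]

lemma spectralMatrix_mul_ofBases (p : N → ℝ) (M : Matrix N N ℂ) :
    spectralMatrix U p * ofBases U V M =
      ofBases U V (Matrix.diagonal (fun i => (p i : ℂ)) * M) := by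
  simp only [spectralMatrix, ofBases, mul_assoc, star_unitary_mul_cancel]

lemma ofBases_mul_spectralMatrix (q : N → ℝ) (M : Matrix N N ℂ) :
    ofBases U V M * spectralMatrix V q =
      ofBases U V (M * Matrix.diagonal (fun j => (q j : ℂ))) := by
  simp only [spectralMatrix, ofBases, mul_assoc, star_unitary_mul_cancel]

lemma norm_ofBases (M : Matrix N N ℂ) : ‖ofBases U V M‖ = ‖M‖ := by
  have hV : star (V : Matrix N N ℂ) * V = 1 := Unitary.coe_star_mul_self V
  rw [← sq_eq_sq₀ (norm_nonneg _) (norm_nonneg _), norm_sq_eq_rtr, norm_sq_eq_rtr]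
  simp only [ofBases, ← Matrix.star_eq_conjTranspose, star_mul, star_star, mul_assoc,
    star_unitary_mul_cancel]
  rw [rtr_mul_comm]
  simp only [mul_assoc, hV, mul_one]

lemma norm_spectralMatrix_mul_ofBases_sq (p : N → ℝ) (M : Matrix N N ℂ) :
    ‖spectralMatrix U p * ofBases U V M‖ ^ 2 = ∑ x : N × N, p x.1 ^ 2 * ‖M x.1 x.2‖ ^ 2 := by
  rw [spectralMatrix_mul_ofBases, norm_ofBases, norm_sq_eq_sum]
  simp only [Matrix.diagonal_mul, norm_mul, mul_pow, Complex.norm_real, Real.norm_eq_abs, sq_abs]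

lemma norm_ofBases_mul_spectralMatrix_sq (q : N → ℝ) (M : Matrix N N ℂ) :
    ‖ofBases U V M * spectralMatrix V q‖ ^ 2 = ∑ x : N × N, ‖M x.1 x.2‖ ^ 2 * q x.2 ^ 2 := by
  rw [ofBases_mul_spectralMatrix, norm_ofBases, norm_sq_eq_sum]
  simp only [Matrix.mul_diagonal, norm_mul, mul_pow, Complex.norm_real, Real.norm_eq_abs, sq_abs]

lemma rtr_spectralMatrix_mul_spectralMatrix (p q : N → ℝ) :
    rtr (spectralMatrix U p * spectralMatrix V q) =
      ∑ x : N × N, p x.1 * q x.2 * ‖(star (U : Matrix N N ℂ) * V) x.1 x.2‖ ^ 2 := by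
  set Z := star (U : Matrix N N ℂ) * V with hZ
  have hcycle : rtr (spectralMatrix U p * spectralMatrix V q) =
      rtr (Matrix.diagonal (fun i => (p i : ℂ)) * Z *
        (Matrix.diagonal (fun j => (q j : ℂ)) * star Z)) := by
    rw [spectralMatrix, mul_assoc, mul_assoc, rtr_mul_comm]
    simp only [spectralMatrix, hZ, star_mul, star_star, mul_assoc]
  rw [hcycle, rtr, Matrix.trace, Complex.re_sum, Fintype.sum_prod_type]
  refine Finset.sum_congr rfl fun i _ => ?_
  rw [Matrix.diag_apply, Matrix.mul_apply, Complex.re_sum]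
  refine Finset.sum_congr rfl fun j _ => ?_
  rw [Matrix.diagonal_mul, Matrix.diagonal_mul, Matrix.star_apply, RCLike.star_def,
    mul_mul_mul_comm, Complex.mul_conj', ← Complex.ofReal_mul, ← Complex.ofReal_pow,
    ← Complex.ofReal_mul, Complex.ofReal_re]

lemma sum_norm_sq_unitary_row (i : N) : ∑ j, ‖(U : Matrix N N ℂ) i j‖ ^ 2 = 1 := by
  have h : ((U : Matrix N N ℂ) * star (U : Matrix N N ℂ)) i i = 1 := by
    rw [Unitary.mul_star_self_of_mem U.2, Matrix.one_apply_eq]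
  rw [Matrix.mul_apply] at h
  simp only [Matrix.star_apply, RCLike.star_def, Complex.mul_conj'] at h
  exact_mod_cast h

end Overlap

section FidelityBound

open scoped Matrix.Norms.Frobenius

variable {N : Type} [Fintype N] [DecidableEq N] {ρ σ ω : Matrix N N ℂ}

lemma fidelity_eq_traceNorm_sq (hρ : ρ.PosSemidef) (hω : ω.IsHermitian) :
    fidelity ρ ω = traceNorm (msqrt ρ * msqrt ω) ^ 2 := by
  rw [fidelity, traceNorm, Matrix.conjTranspose_mul, (isHermitian_msqrt hρ.1).eq,
    (isHermitian_msqrt hω).eq, mul_assoc, mul_assoc, ← mul_assoc (msqrt ρ),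
    msqrt_mul_msqrt hρ]

lemma norm_mul_msqrt_sq (T : Matrix N N ℂ) (hρ : ρ.PosSemidef) :
    ‖T * msqrt ρ‖ ^ 2 = rtr (T * ρ * T.conjTranspose) := by
  rw [norm_sq_eq_rtr, rtr_mul_comm, Matrix.conjTranspose_mul, (isHermitian_msqrt hρ.1).eq,
    mul_assoc, ← mul_assoc (msqrt ρ), msqrt_mul_msqrt hρ, mul_assoc]

lemma norm_msqrt (hρ : IsState ρ) : ‖msqrt ρ‖ = 1 := by
  have h := norm_mul_msqrt_sq 1 hρ.1
  rw [Matrix.conjTranspose_one, one_mul, one_mul, mul_one, rtr, hρ.2, Complex.one_re] at h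
  exact (pow_eq_one_iff_of_nonneg (norm_nonneg _) two_ne_zero).1 h

lemma norm_mul_msqrt_le {c : ℝ} (T : Matrix N N ℂ) (hω : ω.PosSemidef) (hσ : σ.PosSemidef)
    (h : loewnerLE ω ((c : ℂ) • σ)) : ‖T * msqrt ω‖ ≤ √(c * ‖T * msqrt σ‖ ^ 2) := by
  refine Real.le_sqrt_of_sq_le ?_
  have hnonneg := rtr_nonneg (h.mul_mul_conjTranspose_same T)
  rw [mul_sub, sub_mul, rtr_sub, mul_smul_comm, smul_mul_assoc, rtr_smul] at hnonneg
  rw [norm_mul_msqrt_sq T hω, norm_mul_msqrt_sq T hσ]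
  linarith

lemma traceNorm_msqrt_mul_msqrt_le {c : ℝ} (T : Matrix N N ℂ) (hρ : IsState ρ) (hω : IsState ω)
    (hσ : σ.PosSemidef) (h : loewnerLE ω ((c : ℂ) • σ)) :
    traceNorm (msqrt ρ * msqrt ω) ≤ ‖msqrt ρ * (1 - T)‖ + √(c * ‖T * msqrt σ‖ ^ 2) := by
  calc traceNorm (msqrt ρ * msqrt ω)
      = traceNorm (msqrt ρ * (1 - T) * msqrt ω + msqrt ρ * (T * msqrt ω)) := by
        rw [← mul_assoc, ← add_mul, ← mul_add, sub_add_cancel, mul_one]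
    _ ≤ ‖msqrt ρ * (1 - T)‖ * ‖msqrt ω‖ + ‖msqrt ρ‖ * ‖T * msqrt ω‖ :=
        traceNorm_mul_add_mul_le _ _ _ _
    _ ≤ ‖msqrt ρ * (1 - T)‖ + √(c * ‖T * msqrt σ‖ ^ 2) := by
        rw [norm_msqrt hρ, norm_msqrt hω, mul_one, one_mul]
        gcongr
        exact norm_mul_msqrt_le T hω.1 hσ h

end FidelityBound

section EigenOverlap

variable {N : Type} [Fintype N] [DecidableEq N] {ρ σ : Matrix N N ℂ}

/-- The squared overlap `|⟨uᵢ, vⱼ⟩|²` of the `i`-th eigenvector of `ρ` with the `j`-th eigenvector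
of `σ`. -/
def eigenOverlap (hρ : ρ.IsHermitian) (hσ : σ.IsHermitian) (x : N × N) : ℝ :=
  ‖(star (hρ.eigenvectorUnitary : Matrix N N ℂ) * hσ.eigenvectorUnitary) x.1 x.2‖ ^ 2

lemma eigenOverlap_nonneg (hρ : ρ.IsHermitian) (hσ : σ.IsHermitian) (x : N × N) :
    0 ≤ eigenOverlap hρ hσ x :=
  sq_nonneg _

lemma sum_mul_eigenOverlap (hρ : ρ.IsHermitian) (hσ : σ.IsHermitian) (f : N → ℝ) :
    ∑ x : N × N, f x.1 * eigenOverlap hρ hσ x = ∑ i, f i := by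
  simp only [Fintype.sum_prod_type, ← Finset.mul_sum]
  refine Finset.sum_congr rfl fun i _ => ?_
  rw [show ∑ j, eigenOverlap hρ hσ (i, j) = 1 from
    sum_norm_sq_unitary_row (star hρ.eigenvectorUnitary * hσ.eigenvectorUnitary) i, mul_one]

lemma rtr_matFun_mul_matFun (hρ : ρ.IsHermitian) (hσ : σ.IsHermitian) (f g : ℝ → ℝ) :
    rtr (matFun f ρ * matFun g σ) =
      ∑ x : N × N, f (hρ.eigenvalues x.1) * g (hσ.eigenvalues x.2) * eigenOverlap hρ hσ x := by
  rw [matFun_eq_spectralMatrix hρ, matFun_eq_spectralMatrix hσ,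
    rtr_spectralMatrix_mul_spectralMatrix]
  rfl

lemma sum_eigenvalues_eq_one (hρ : IsState ρ) : ∑ i, hρ.1.1.eigenvalues i = 1 := by
  rw [← show rtr ρ = 1 by rw [rtr, hρ.2, Complex.one_re], ← rtr_spectralMatrix,
    spectralMatrix_eigenvalues]

/-- The real power `x ^ t` on the support, with `0 ^ t := 0` for every `t`. -/
def suppRpow (t x : ℝ) : ℝ := if x = 0 then 0 else x ^ t

lemma suppRpow_zero (t : ℝ) : suppRpow t 0 = 0 := if_pos rfl

lemma suppRpow_of_ne_zero (t : ℝ) {x : ℝ} (hx : x ≠ 0) : suppRpow t x = x ^ t := if_neg hx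

lemma suppRpow_nonneg (t : ℝ) {x : ℝ} (hx : 0 ≤ x) : 0 ≤ suppRpow t x := by
  rw [suppRpow]
  split_ifs <;> positivity

/-- The Petz quasi-divergence `Tr[ρ^α σ^(1-α)]`, so that
`D_α(ρ‖σ) = (α - 1)⁻¹ * log Tr[ρ^α σ^(1-α)]`. -/
def petzQuasi (α : ℝ) (ρ σ : Matrix N N ℂ) : ℝ := rtr (mpow ρ α * mpow σ (1 - α))

lemma petzQuasi_eq_sum (α : ℝ) (hρ : ρ.IsHermitian) (hσ : σ.IsHermitian) :
    petzQuasi α ρ σ = ∑ x : N × N, suppRpow α (hρ.eigenvalues x.1) *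
      suppRpow (1 - α) (hσ.eigenvalues x.2) * eigenOverlap hρ hσ x :=
  rtr_matFun_mul_matFun hρ hσ _ _

lemma petzRenyi_eq {α : ℝ} (hsupp : 1 < α → SuppLE ρ σ) (hpos : 0 < petzQuasi α ρ σ) :
    petzRenyi α ρ σ = (((α - 1)⁻¹ * Real.logb 2 (petzQuasi α ρ σ) : ℝ) : EReal) := by
  rw [petzRenyi, if_neg (not_and_not_right.2 hsupp), ← petzQuasi, elog, if_neg (not_le.2 hpos),
    EReal.coe_mul]

end EigenOverlap

section LikelihoodRatio

open scoped Matrix.Norms.Frobenius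

variable {N : Type} [Fintype N] [DecidableEq N] {ρ σ ω : Matrix N N ℂ}

/-- The likelihood-ratio operator `∑ |uᵢ⟩⟨uᵢ|vⱼ⟩⟨vⱼ|` over the pairs of eigenvectors of `ρ` and `σ`
whose eigenvalues satisfy `pᵢ ≥ τ * qⱼ`; it is Hermitian only if `ρ` and `σ` commute. -/
def likelihoodRatioOp (τ : ℝ) (hρ : ρ.IsHermitian) (hσ : σ.IsHermitian) : Matrix N N ℂ :=
  ofBases hρ.eigenvectorUnitary hσ.eigenvectorUnitary (Matrix.of fun i j =>
    if hρ.eigenvalues i < τ * hσ.eigenvalues j then 0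
    else (star (hρ.eigenvectorUnitary : Matrix N N ℂ) * hσ.eigenvectorUnitary) i j)

lemma one_sub_likelihoodRatioOp (τ : ℝ) (hρ : ρ.IsHermitian) (hσ : σ.IsHermitian) :
    1 - likelihoodRatioOp τ hρ hσ =
      ofBases hρ.eigenvectorUnitary hσ.eigenvectorUnitary (Matrix.of fun i j =>
        if hρ.eigenvalues i < τ * hσ.eigenvalues j then
          (star (hρ.eigenvectorUnitary : Matrix N N ℂ) * hσ.eigenvectorUnitary) i j
        else 0) := by
  rw [← ofBases_overlap hρ.eigenvectorUnitary hσ.eigenvectorUnitary, likelihoodRatioOp,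
    ← ofBases_sub]
  congr 1
  ext i j
  rw [Matrix.sub_apply, Matrix.of_apply, Matrix.of_apply]
  split_ifs
  · rw [sub_zero]
  · rw [sub_self]

lemma le_rpow_mul_suppRpow {p q τ s : ℝ} (hp : 0 ≤ p) (hq : 0 ≤ q) (hτ : 0 < τ) (hs : 0 ≤ s)
    (h : p < τ * q) : p ≤ τ ^ s * (suppRpow (1 - s) p * suppRpow s q) := by
  rcases hp.eq_or_lt with rfl | hp
  · rw [suppRpow_zero, zero_mul, mul_zero]
  have hq0 : q ≠ 0 := by
    rintro rfl
    linarith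
  rw [suppRpow_of_ne_zero _ hp.ne', suppRpow_of_ne_zero _ hq0]
  calc p = p ^ (1 - s) * p ^ s := by rw [← Real.rpow_add hp, sub_add_cancel, Real.rpow_one]
    _ ≤ p ^ (1 - s) * (τ * q) ^ s := by gcongr
    _ = τ ^ s * (p ^ (1 - s) * q ^ s) := by rw [Real.mul_rpow hτ.le hq]; ring

lemma norm_msqrt_mul_one_sub_likelihoodRatioOp_sq_le {τ s : ℝ} (hρ : ρ.PosSemidef)
    (hσ : σ.PosSemidef) (hτ : 0 < τ) (hs : 0 ≤ s) :
    ‖msqrt ρ * (1 - likelihoodRatioOp τ hρ.1 hσ.1)‖ ^ 2 ≤ τ ^ s * petzQuasi (1 - s) ρ σ := by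
  rw [msqrt, matFun_eq_spectralMatrix hρ.1, one_sub_likelihoodRatioOp,
    norm_spectralMatrix_mul_ofBases_sq, petzQuasi_eq_sum _ hρ.1 hσ.1, Finset.mul_sum,
    sub_sub_cancel]
  refine Finset.sum_le_sum fun x _ => ?_
  have hp := hρ.eigenvalues_nonneg x.1
  have hq := hσ.eigenvalues_nonneg x.2
  have hnonneg := eigenOverlap_nonneg hρ.1 hσ.1 x
  rw [Function.comp_apply, Real.sq_sqrt hp, ← mul_assoc (τ ^ s), Matrix.of_apply]
  split_ifs with hlt
  · exact mul_le_mul_of_nonneg_right (le_rpow_mul_suppRpow hp hq hτ hs hlt) hnonneg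
  · rw [norm_zero, zero_pow two_ne_zero, mul_zero]
    have := suppRpow_nonneg (1 - s) hp
    have := suppRpow_nonneg s hq
    positivity

lemma norm_likelihoodRatioOp_mul_msqrt_sq_le {τ : ℝ} (hρ : IsState ρ) (hσ : σ.PosSemidef)
    (hτ : 0 < τ) : ‖likelihoodRatioOp τ hρ.1.1 hσ.1 * msqrt σ‖ ^ 2 ≤ τ⁻¹ := by
  rw [msqrt, matFun_eq_spectralMatrix hσ.1, likelihoodRatioOp, norm_ofBases_mul_spectralMatrix_sq,
    ← mul_one τ⁻¹, ← sum_eigenvalues_eq_one hρ, ← sum_mul_eigenOverlap hρ.1.1 hσ.1,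
    Finset.mul_sum]
  refine Finset.sum_le_sum fun x _ => ?_
  have hp := hρ.1.eigenvalues_nonneg x.1
  have hnonneg := eigenOverlap_nonneg hρ.1.1 hσ.1 x
  rw [Function.comp_apply, Real.sq_sqrt (hσ.eigenvalues_nonneg x.2), Matrix.of_apply]
  split_ifs with hlt
  · rw [norm_zero, zero_pow two_ne_zero, zero_mul]
    positivity
  · rw [mul_comm, ← mul_assoc]
    refine mul_le_mul_of_nonneg_right ?_ hnonneg
    rw [inv_mul_eq_div, le_div_iff₀' hτ]
    exact not_lt.1 hlt

lemma traceNorm_msqrt_mul_msqrt_le_petzQuasi {c τ s : ℝ} (hρ : IsState ρ) (hω : IsState ω)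
    (hσ : σ.PosSemidef) (hc : 0 ≤ c) (h : loewnerLE ω ((c : ℂ) • σ)) (hτ : 0 < τ) (hs : 0 ≤ s) :
    traceNorm (msqrt ρ * msqrt ω) ≤ √(τ ^ s * petzQuasi (1 - s) ρ σ) + √(c / τ) := by
  refine (traceNorm_msqrt_mul_msqrt_le (likelihoodRatioOp τ hρ.1.1 hσ.1) hρ hω hσ h).trans
    (add_le_add ?_ (Real.sqrt_le_sqrt ?_))
  · exact Real.le_sqrt_of_sq_le (norm_msqrt_mul_one_sub_likelihoodRatioOp_sq_le hρ.1 hσ hτ hs)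
  · exact mul_le_mul_of_nonneg_left (norm_likelihoodRatioOp_mul_msqrt_sq_le hρ hσ hτ) hc

end LikelihoodRatio

section OneShot

variable {N : Type} [Fintype N] [DecidableEq N] {ρ σ ω : Matrix N N ℂ}

lemma le_dMaxSmooth {δ : ℝ} {x : EReal}
    (h : ∀ ω, IsState ω → sineDist ρ ω ≤ δ →
      ∀ lam : ℝ, loewnerLE ω ((((2 : ℝ) ^ lam : ℝ) : ℂ) • σ) → x ≤ lam) :
    x ≤ dMaxSmooth δ ρ σ := by
  refine le_iInf₂ fun ω hω => le_sInf ?_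
  rintro _ ⟨lam, rfl, hlam⟩
  exact h ω hω.1 hω.2 lam hlam

lemma one_sub_lt_traceNorm_of_sineDist_le {ε : ℝ} (hρ : ρ.PosSemidef) (hω : ω.IsHermitian)
    (hε : 0 < ε ∧ ε < 1) (h : sineDist ρ ω ≤ ε) : 1 - ε < traceNorm (msqrt ρ * msqrt ω) := by
  rw [sineDist, Real.sqrt_le_iff, fidelity_eq_traceNorm_sq hρ hω] at h
  refine lt_of_pow_lt_pow_left₀ 2 (traceNorm_nonneg _) ?_
  nlinarith [mul_pos hε.1 (sub_pos.2 hε.2)]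

-- The threshold `τ = 2 ^ (lam + 2 * L)` makes the second error term equal to `(1 - ε) / 2`.
lemma lt_rpow_mul_petzQuasi {ε s lam L : ℝ} (hρ : IsState ρ) (hσ : σ.PosSemidef) (hω : IsState ω)
    (hs : 0 ≤ s) (hε : 0 < ε ∧ ε < 1) (hL : 1 - ε = 2 * 2 ^ (-L)) (hdist : sineDist ρ ω ≤ ε)
    (hlam : loewnerLE ω ((((2 : ℝ) ^ lam : ℝ) : ℂ) • σ)) :
    (2 : ℝ) ^ (-2 * L) < 2 ^ (s * (lam + 2 * L)) * petzQuasi (1 - s) ρ σ := by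
  have hlt := (one_sub_lt_traceNorm_of_sineDist_le hρ.1 hω.1.1 hε hdist).trans_le
    (traceNorm_msqrt_mul_msqrt_le_petzQuasi (τ := 2 ^ (lam + 2 * L)) hρ hω hσ (by positivity)
      hlam (by positivity) hs)
  have hsqrt : √((2 : ℝ) ^ lam / 2 ^ (lam + 2 * L)) = 2 ^ (-L) := by
    rw [← Real.rpow_sub two_pos, Real.sqrt_eq_rpow, ← Real.rpow_mul two_pos.le]
    ring_nf
  have hlt' : (2 : ℝ) ^ (-L) < √((2 ^ (lam + 2 * L)) ^ s * petzQuasi (1 - s) ρ σ) := by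
    linarith
  rw [Real.lt_sqrt (by positivity), ← Real.rpow_mul_natCast two_pos.le,
    ← Real.rpow_mul two_pos.le] at hlt'
  convert hlt' using 2 <;> push_cast <;> ring_nf

theorem petzRenyi_sub_le_dMaxSmooth {ε s : ℝ} (hρ : IsState ρ) (hσ : σ.PosSemidef) (hs : 0 < s)
    (hε : 0 < ε ∧ ε < 1) :
    petzRenyi (1 - s) ρ σ - ((2 * (1 + s⁻¹) * Real.logb 2 (2 / (1 - ε)) : ℝ) : EReal) ≤
      dMaxSmooth ε ρ σ := by
  refine le_dMaxSmooth fun ω hω hdist lam hlam => ?_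
  set L := Real.logb 2 (2 / (1 - ε))
  have hL : 1 - ε = 2 * 2 ^ (-L) := by
    rw [Real.rpow_neg two_pos.le, Real.rpow_logb two_pos (by norm_num)
      (div_pos two_pos (sub_pos.2 hε.2)), inv_div, mul_div_cancel₀ _ two_ne_zero]
  have hlt := lt_rpow_mul_petzQuasi hρ hσ hω hs.le hε hL hdist hlam
  have hQ : 0 < petzQuasi (1 - s) ρ σ :=
    pos_of_mul_pos_right ((Real.rpow_pos_of_pos two_pos _).trans hlt) (by positivity)
  have hlog : -2 * L < s * (lam + 2 * L) + Real.logb 2 (petzQuasi (1 - s) ρ σ) := by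
    have := Real.logb_lt_logb one_lt_two (Real.rpow_pos_of_pos two_pos _) hlt
    rwa [Real.logb_mul (by positivity) hQ.ne', Real.logb_rpow two_pos (by norm_num),
      Real.logb_rpow two_pos (by norm_num)] at this
  rw [petzRenyi_eq (fun h => absurd h (by linarith)) hQ, ← EReal.coe_sub, EReal.coe_le_coe_iff]
  rw [sub_sub_cancel_left, inv_neg, ← sub_nonneg]
  have hdiv : 0 ≤ s⁻¹ * (s * (lam + 2 * L) + Real.logb 2 (petzQuasi (1 - s) ρ σ) - -2 * L) :=
    mul_nonneg (inv_nonneg.2 hs.le) (sub_nonneg.2 hlog.le)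
  convert hdiv using 1
  field_simp
  ring

end OneShot

section TensorPower

lemma im_trace_mul_eq_zero {N : Type*} [Fintype N] {A B : Matrix N N ℂ}
    (hA : A.IsHermitian) (hB : B.IsHermitian) : (A * B).trace.im = 0 := by
  rw [← Complex.conj_eq_iff_im, starRingEnd_apply, ← Matrix.trace_conjTranspose,
    Matrix.conjTranspose_mul, hA.eq, hB.eq, Matrix.trace_mul_comm]

lemma posSemidef_tpowMat {N : Type} [Finite N] [DecidableEq N] {A : Matrix N N ℂ}
    (hA : A.PosSemidef) : ∀ k, (tpowMat A k).PosSemidef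
  | 0 => Matrix.PosSemidef.one (n := PUnit)
  | k + 1 =>
    haveI := Fintype.ofFinite N
    (posSemidef_tpowMat hA k).kronecker hA

variable {M N : Type} [Fintype M] [DecidableEq M] [Fintype N] [DecidableEq N]

lemma spectralMatrix_kronecker (U : Matrix.unitaryGroup M ℂ) (V : Matrix.unitaryGroup N ℂ)
    (p : M → ℝ) (q : N → ℝ) :
    spectralMatrix U p ⊗ₖ spectralMatrix V q =
      spectralMatrix
        ⟨(U : Matrix M M ℂ) ⊗ₖ (V : Matrix N N ℂ), Matrix.kronecker_mem_unitary U.2 V.2⟩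
        (fun x => p x.1 * q x.2) := by
  simp only [spectralMatrix, Matrix.star_eq_conjTranspose, Matrix.mul_kronecker_mul,
    Matrix.conjTranspose_kronecker, Matrix.diagonal_kronecker_diagonal, Complex.ofReal_mul]

lemma suppRpow_mul (t : ℝ) {x y : ℝ} (hx : 0 ≤ x) (hy : 0 ≤ y) :
    suppRpow t (x * y) = suppRpow t x * suppRpow t y := by
  rcases eq_or_ne x 0 with rfl | hx0
  · rw [zero_mul, suppRpow_zero, zero_mul]
  rcases eq_or_ne y 0 with rfl | hy0
  · rw [mul_zero, suppRpow_zero, mul_zero]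
  rw [suppRpow_of_ne_zero _ (mul_ne_zero hx0 hy0), suppRpow_of_ne_zero _ hx0,
    suppRpow_of_ne_zero _ hy0, Real.mul_rpow hx hy]

lemma mpow_eq_spectralMatrix {A : Matrix N N ℂ} (hA : A.IsHermitian) (t : ℝ) :
    mpow A t = spectralMatrix hA.eigenvectorUnitary (suppRpow t ∘ hA.eigenvalues) :=
  matFun_eq_spectralMatrix hA _

lemma mpow_kronecker {A : Matrix M M ℂ} {B : Matrix N N ℂ} (hA : A.PosSemidef)
    (hB : B.PosSemidef) (t : ℝ) : mpow (A ⊗ₖ B) t = mpow A t ⊗ₖ mpow B t := by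
  conv_lhs => rw [← spectralMatrix_eigenvalues hA.1, ← spectralMatrix_eigenvalues hB.1,
    spectralMatrix_kronecker, mpow, matFun_spectralMatrix]
  rw [mpow_eq_spectralMatrix hA.1, mpow_eq_spectralMatrix hB.1, spectralMatrix_kronecker]
  exact congrArg _ (funext fun x =>
    suppRpow_mul t (hA.eigenvalues_nonneg x.1) (hB.eigenvalues_nonneg x.2))

lemma petzQuasi_kronecker (α : ℝ) {A C : Matrix M M ℂ} {B D : Matrix N N ℂ} (hA : A.PosSemidef)
    (hB : B.PosSemidef) (hC : C.PosSemidef) (hD : D.PosSemidef) :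
    petzQuasi α (A ⊗ₖ B) (C ⊗ₖ D) = petzQuasi α A C * petzQuasi α B D := by
  rw [petzQuasi, mpow_kronecker hA hB, mpow_kronecker hC hD, ← Matrix.mul_kronecker_mul, rtr,
    Matrix.trace_kronecker, Complex.mul_re]
  exact sub_eq_self.2 (mul_eq_zero_of_left
    (im_trace_mul_eq_zero (isHermitian_matFun hA.1 _) (isHermitian_matFun hC.1 _)) _)

lemma mpow_one (t : ℝ) : mpow (1 : Matrix N N ℂ) t = 1 := by
  have h : spectralMatrix (1 : Matrix.unitaryGroup N ℂ) 1 = 1 := by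
    simp only [spectralMatrix, Pi.one_apply, Complex.ofReal_one, Matrix.diagonal_one, mul_one,
      OneMemClass.coe_one, star_one]
  conv_lhs => rw [← h, mpow, matFun_spectralMatrix]
  conv_rhs => rw [← h]
  exact congrArg _ (funext fun _ => (if_neg one_ne_zero).trans (Real.one_rpow t))

lemma petzQuasi_one (α : ℝ) : petzQuasi α (1 : Matrix N N ℂ) 1 = Fintype.card N := by
  rw [petzQuasi, mpow_one, mpow_one, one_mul, rtr, Matrix.trace_one, Complex.natCast_re]

variable {A B : Matrix N N ℂ}

lemma trace_tpowMat (A : Matrix N N ℂ) : ∀ k, (tpowMat A k).trace = A.trace ^ k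
  | 0 => (Matrix.trace_one (n := PUnit)).trans (by rw [Fintype.card_punit, Nat.cast_one, pow_zero])
  | k + 1 => by
    rw [pow_succ, ← trace_tpowMat A k]
    exact Matrix.trace_kronecker _ _

lemma isState_tpowMat (hA : IsState A) (k : ℕ) : IsState (tpowMat A k) :=
  ⟨posSemidef_tpowMat hA.1 k, by rw [trace_tpowMat, hA.2, one_pow]⟩

lemma petzQuasi_tpowMat (α : ℝ) (hA : A.PosSemidef) (hB : B.PosSemidef) :
    ∀ k, petzQuasi α (tpowMat A k) (tpowMat B k) = petzQuasi α A B ^ k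
  | 0 => (petzQuasi_one (N := PUnit) α).trans (by rw [Fintype.card_punit, Nat.cast_one, pow_zero])
  | k + 1 => by
    rw [pow_succ, ← petzQuasi_tpowMat α hA hB k]
    exact petzQuasi_kronecker α (posSemidef_tpowMat hA k) hA (posSemidef_tpowMat hB k) hB

end TensorPower

section NussbaumSzkola

variable {N : Type} [Fintype N] [DecidableEq N] {ρ σ : Matrix N N ℂ}

/-- The first Nussbaum–Szkoła distribution `pᵢ |⟨uᵢ, vⱼ⟩|²` of a pair of matrices. -/
def nsWeight (hρ : ρ.IsHermitian) (hσ : σ.IsHermitian) (x : N × N) : ℝ :=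
  hρ.eigenvalues x.1 * eigenOverlap hρ hσ x

/-- The log-likelihood ratio `ln pᵢ - ln qⱼ` of the two Nussbaum–Szkoła distributions; its value is
junk where an eigenvalue vanishes. -/
def nsLogRatio (hρ : ρ.IsHermitian) (hσ : σ.IsHermitian) (x : N × N) : ℝ :=
  Real.log (hρ.eigenvalues x.1) - Real.log (hσ.eigenvalues x.2)

lemma nsWeight_nonneg (hρ : ρ.PosSemidef) (hσ : σ.IsHermitian) (x : N × N) :
    0 ≤ nsWeight hρ.1 hσ x :=
  mul_nonneg (hρ.eigenvalues_nonneg x.1) (eigenOverlap_nonneg hρ.1 hσ x)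

lemma sum_nsWeight (hρ : IsState ρ) (hσ : σ.IsHermitian) : ∑ x, nsWeight hρ.1.1 hσ x = 1 :=
  (sum_mul_eigenOverlap hρ.1.1 hσ _).trans (sum_eigenvalues_eq_one hρ)

lemma star_mul_spectralMatrix_mul (U : Matrix.unitaryGroup N ℂ) (p : N → ℝ) (X : Matrix N N ℂ) :
    star (U : Matrix N N ℂ) * (spectralMatrix U p * X) =
      Matrix.diagonal (fun i => (p i : ℂ)) * (star (U : Matrix N N ℂ) * X) := by
  simp only [spectralMatrix, mul_assoc, star_unitary_mul_cancel]

lemma nsWeight_eq_zero (hρ : ρ.IsHermitian) (hσ : σ.IsHermitian) (hsupp : SuppLE ρ σ)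
    {x : N × N} (hx : hσ.eigenvalues x.2 = 0) : nsWeight hρ hσ x = 0 := by
  have hker : ρ.mulVec (fun k => (hσ.eigenvectorUnitary : Matrix N N ℂ) k x.2) = 0 := by
    refine hsupp _ ?_
    have := hσ.mulVec_eigenvectorBasis x.2
    rwa [hx, zero_smul] at this
  have hcol (k : N) : (ρ * (hσ.eigenvectorUnitary : Matrix N N ℂ)) k x.2 = 0 := congrFun hker k
  have h := congrFun₂ (star_mul_spectralMatrix_mul hρ.eigenvectorUnitary hρ.eigenvalues
    (hσ.eigenvectorUnitary : Matrix N N ℂ)) x.1 x.2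
  rw [spectralMatrix_eigenvalues, Matrix.diagonal_mul, Matrix.mul_apply] at h
  simp only [hcol, mul_zero, Finset.sum_const_zero, zero_eq_mul, Complex.ofReal_eq_zero] at h
  rw [nsWeight, eigenOverlap]
  rcases h with h | h
  · rw [h, zero_mul]
  · rw [h, norm_zero, zero_pow two_ne_zero, mul_zero]

lemma coe_toReal_relEntropy (hsupp : SuppLE ρ σ) :
    ((relEntropy ρ σ).toReal : EReal) = relEntropy ρ σ := by
  rw [relEntropy, if_pos hsupp, EReal.toReal_coe]

lemma log_two_mul_relEntropy (hρ : ρ.IsHermitian) (hσ : σ.IsHermitian) (hsupp : SuppLE ρ σ) :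
    Real.log 2 * (relEntropy ρ σ).toReal = ∑ x, nsWeight hρ hσ x * nsLogRatio hρ hσ x := by
  have hself : ρ * mlog ρ = matFun (id * Real.logb 2) ρ := by
    rw [← matFun_mul_matFun hρ, matFun_id hρ, mlog]
  have hcross : ρ * mlog σ = matFun id ρ * matFun (Real.logb 2) σ := by rw [matFun_id hρ, mlog]
  rw [relEntropy, if_pos hsupp, EReal.toReal_coe, mul_sub, rtr_sub, hself, hcross, rtr_matFun hρ,
    rtr_matFun_mul_matFun hρ hσ, ← sum_mul_eigenOverlap hρ hσ, ← Finset.sum_sub_distrib,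
    Finset.mul_sum]
  refine Finset.sum_congr rfl fun x _ => ?_
  have hlog : Real.log 2 ≠ 0 := (Real.log_pos one_lt_two).ne'
  simp only [nsWeight, nsLogRatio, Pi.mul_apply, id_eq, Real.logb]
  field_simp

lemma suppRpow_one_add_mul_suppRpow_neg {p q : ℝ} (hp : 0 ≤ p) (hq : 0 < q) (a : ℝ) :
    suppRpow (1 + a) p * suppRpow (-a) q = p * Real.exp (a * (Real.log p - Real.log q)) := by
  rcases hp.eq_or_lt with rfl | hp
  · rw [suppRpow_zero, zero_mul, zero_mul]
  rw [suppRpow_of_ne_zero _ hp.ne', suppRpow_of_ne_zero _ hq.ne', Real.rpow_add hp, Real.rpow_one,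
    Real.rpow_def_of_pos hp, Real.rpow_def_of_pos hq, mul_assoc, ← Real.exp_add]
  ring_nf

lemma petzQuasi_one_add_eq_sum (hρ : ρ.PosSemidef) (hσ : σ.PosSemidef) (hsupp : SuppLE ρ σ)
    (a : ℝ) : petzQuasi (1 + a) ρ σ =
      ∑ x, nsWeight hρ.1 hσ.1 x * Real.exp (a * nsLogRatio hρ.1 hσ.1 x) := by
  rw [petzQuasi_eq_sum _ hρ.1 hσ.1, sub_add_cancel_left]
  refine Finset.sum_congr rfl fun x _ => ?_
  rcases (hσ.eigenvalues_nonneg x.2).eq_or_lt with hq | hq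
  · rw [← hq, suppRpow_zero, nsWeight_eq_zero hρ.1 hσ.1 hsupp hq.symm, mul_zero, zero_mul, zero_mul]
  · rw [suppRpow_one_add_mul_suppRpow_neg (hρ.eigenvalues_nonneg x.1) hq, nsWeight, nsLogRatio,
      mul_right_comm]

lemma petzQuasi_pos (hρ : IsState ρ) (hσ : σ.PosSemidef) (hsupp : SuppLE ρ σ) (α : ℝ) :
    0 < petzQuasi α ρ σ := by
  obtain ⟨x, -, hx⟩ : ∃ x ∈ Finset.univ, 0 < nsWeight hρ.1.1 hσ.1 x := by
    refine Finset.exists_lt_of_sum_lt ?_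
    rw [Finset.sum_const_zero, sum_nsWeight hρ]
    exact one_pos
  rw [← add_sub_cancel 1 α, petzQuasi_one_add_eq_sum hρ.1 hσ hsupp]
  exact Finset.sum_pos'
    (fun y _ => mul_nonneg (nsWeight_nonneg hρ.1 hσ.1 y) (Real.exp_pos _).le)
    ⟨x, Finset.mem_univ x, mul_pos hx (Real.exp_pos _)⟩

end NussbaumSzkola

section CGamma

variable {N : Type} [Fintype N] [DecidableEq N] {ρ σ : Matrix N N ℂ} {γ : ℝ}

lemma epow2_coe (x : ℝ) : epow2 x = ((2 ^ x : ℝ) : EReal) := by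
  rw [epow2, if_neg (EReal.coe_ne_top _), if_neg (EReal.coe_ne_bot _), EReal.toReal_coe]

lemma epow2_ne_bot (x : EReal) : epow2 x ≠ ⊥ := by
  induction x with
  | bot => rw [epow2, if_neg bot_ne_top, if_pos rfl]; exact EReal.zero_ne_bot
  | coe x => rw [epow2_coe]; exact EReal.coe_ne_bot _
  | top => rw [epow2, if_pos rfl]; exact top_ne_bot

lemma suppLE_of_cGamma_lt_top (hγ : 0 < γ) (hc : cGamma γ ρ σ < ⊤) : SuppLE ρ σ := by
  by_contra hsupp
  refine hc.ne ?_
  have hpetz : petzRenyi (1 + γ) ρ σ = ⊤ := if_pos ⟨by linarith, hsupp⟩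
  have hepow : epow2 ⊤ = ⊤ := if_pos rfl
  rw [cGamma, hpetz, EReal.coe_mul_top_of_pos hγ, hepow, EReal.top_add_of_ne_bot (epow2_ne_bot _),
    ← EReal.coe_one, EReal.top_add_coe, elogE, if_pos rfl,
    EReal.coe_mul_top_of_pos (inv_pos.2 hγ)]

lemma epow2_mul_petzRenyi_one_add (hρ : IsState ρ) (hσ : σ.PosSemidef) (hsupp : SuppLE ρ σ)
    {a : ℝ} (ha : a ≠ 0) :
    epow2 (a * petzRenyi (1 + a) ρ σ) = ((petzQuasi (1 + a) ρ σ : ℝ) : EReal) := by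
  have hpos := petzQuasi_pos hρ hσ hsupp (1 + a)
  rw [petzRenyi_eq (fun _ => hsupp) hpos, add_sub_cancel_left, ← EReal.coe_mul,
    mul_inv_cancel_left₀ ha, epow2_coe, Real.rpow_logb two_pos (by norm_num) hpos]

lemma toReal_cGamma (hρ : IsState ρ) (hσ : σ.PosSemidef) (hsupp : SuppLE ρ σ) (hγ : γ ≠ 0) :
    (cGamma γ ρ σ).toReal =
      γ⁻¹ * Real.logb 2 (petzQuasi (1 + γ) ρ σ + petzQuasi (1 + -γ) ρ σ + 1) := by
  have hpos := petzQuasi_pos hρ hσ hsupp (1 + γ)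
  have hneg := petzQuasi_pos hρ hσ hsupp (1 + -γ)
  rw [cGamma, sub_eq_add_neg, epow2_mul_petzRenyi_one_add hρ hσ hsupp hγ,
    epow2_mul_petzRenyi_one_add hρ hσ hsupp (neg_ne_zero.2 hγ), ← EReal.coe_add, ← EReal.coe_one,
    ← EReal.coe_add, elogE, if_neg (EReal.coe_ne_top _), EReal.toReal_coe, elog,
    if_neg (by linarith), ← EReal.coe_mul, EReal.toReal_coe]

lemma two_rpow_mul_cGamma (hρ : IsState ρ) (hσ : σ.PosSemidef) (hsupp : SuppLE ρ σ) (hγ : γ ≠ 0) :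
    (2 : ℝ) ^ (γ * (cGamma γ ρ σ).toReal) =
      2 * ∑ x, nsWeight hρ.1.1 hσ.1 x * Real.cosh (γ * nsLogRatio hρ.1.1 hσ.1 x) + 1 := by
  have hpos := petzQuasi_pos hρ hσ hsupp (1 + γ)
  have hneg := petzQuasi_pos hρ hσ hsupp (1 + -γ)
  rw [toReal_cGamma hρ hσ hsupp hγ, mul_inv_cancel_left₀ hγ,
    Real.rpow_logb two_pos (by norm_num) (by linarith), petzQuasi_one_add_eq_sum hρ.1 hσ hsupp,
    petzQuasi_one_add_eq_sum hρ.1 hσ hsupp, ← Finset.sum_add_distrib, Finset.mul_sum]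
  congr 1
  refine Finset.sum_congr rfl fun x _ => ?_
  rw [Real.cosh_eq, neg_mul]
  ring

lemma sum_nsWeight_mul_cosh_le (hρ : IsState ρ) (hσ : σ.PosSemidef) (hsupp : SuppLE ρ σ)
    (hγ : γ ≠ 0) :
    ∑ x, nsWeight hρ.1.1 hσ.1 x * Real.cosh (γ * nsLogRatio hρ.1.1 hσ.1 x) ≤
      Real.cosh (Real.log 2 * (γ * (cGamma γ ρ σ).toReal)) := by
  have h := two_rpow_mul_cGamma hρ hσ hsupp hγ
  rw [Real.rpow_def_of_pos two_pos] at h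
  rw [Real.cosh_eq (_ * (γ * _))]
  linarith [Real.exp_pos (-(Real.log 2 * (γ * (cGamma γ ρ σ).toReal)))]

lemma eleven_div_seven_le_mul_cGamma (hρ : IsState ρ) (hσ : σ.PosSemidef) (hsupp : SuppLE ρ σ)
    (hγ : γ ≠ 0) : 11 / 7 ≤ γ * (cGamma γ ρ σ).toReal := by
  have hone : 1 ≤ ∑ x, nsWeight hρ.1.1 hσ.1 x * Real.cosh (γ * nsLogRatio hρ.1.1 hσ.1 x) := by
    rw [← sum_nsWeight hρ hσ.1]
    exact Finset.sum_le_sum fun x _ =>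
      le_mul_of_one_le_right (nsWeight_nonneg hρ.1 hσ.1 x) (Real.one_le_cosh _)
  have hthree : (3 : ℝ) ≤ 2 ^ (γ * (cGamma γ ρ σ).toReal) := by
    rw [two_rpow_mul_cGamma hρ hσ hsupp hγ]
    linarith
  have hpow : (2 : ℝ) ^ (11 : ℝ) ≤ 2 ^ (γ * (cGamma γ ρ σ).toReal * 7) := by
    rw [Real.rpow_mul two_pos.le]
    exact le_trans (by norm_num) (Real.rpow_le_rpow (by norm_num) hthree (by norm_num))
  rw [div_le_iff₀ (by norm_num)]
  exact (Real.rpow_le_rpow_left_iff one_lt_two).1 hpow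

lemma eleven_div_seven_le_cGamma (hρ : IsState ρ) (hσ : σ.PosSemidef) (hsupp : SuppLE ρ σ)
    (hγ : 0 < γ ∧ γ ≤ 1) : 11 / 7 ≤ (cGamma γ ρ σ).toReal := by
  have h := eleven_div_seven_le_mul_cGamma hρ hσ hsupp hγ.1.ne'
  have hpos : 0 < (cGamma γ ρ σ).toReal := pos_of_mul_pos_right (by linarith) hγ.1.le
  exact h.trans (mul_le_of_le_one_left hpos.le hγ.2)

lemma petzQuasi_one_sub_le (hρ : IsState ρ) (hσ : σ.PosSemidef) (hγ : 0 < γ ∧ γ ≤ 1)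
    (hsupp : SuppLE ρ σ) {t : ℝ} (ht : t ∈ Set.Icc 0 1) :
    petzQuasi (1 - t / (cGamma γ ρ σ).toReal) ρ σ ≤
      Real.exp (-(t / (cGamma γ ρ σ).toReal * (Real.log 2 * (relEntropy ρ σ).toReal)) +
        t ^ 2 / 2) := by
  set c := (cGamma γ ρ σ).toReal
  have hγc : 11 / 7 ≤ γ * c := eleven_div_seven_le_mul_cGamma hρ hσ hsupp hγ.1.ne'
  have hlog : 0 < Real.log 2 := Real.log_pos one_lt_two
  have hy : t / (γ * c) ∈ Set.Icc (0 : ℝ) 1 :=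
    ⟨div_nonneg ht.1 (by linarith), div_le_one_of_le₀ (by linarith [ht.2]) (by linarith)⟩
  have hmgf := sum_mul_exp_neg_mul_le (nsWeight_nonneg hρ.1 hσ.1) (sum_nsWeight hρ hσ.1)
    (by positivity) (sum_nsWeight_mul_cosh_le hρ hσ hsupp hγ.1.ne') hy
  have hcosh : 2 * (Real.cosh (t * Real.log 2) - 1) ≤ t ^ 2 / 2 := by
    have := cosh_mul_sub_one_le ht hlog.le
    rw [Real.cosh_log two_pos] at this
    linarith
  have hc : c ≠ 0 := right_ne_zero_of_mul (by linarith : 0 < γ * c).ne'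
  have hγ0 := hγ.1.ne'
  have harg : t / (γ * c) * (Real.log 2 * (γ * c)) = t * Real.log 2 := by field_simp
  have hmean : t / (γ * c) * ∑ x, nsWeight hρ.1.1 hσ.1 x * (γ * nsLogRatio hρ.1.1 hσ.1 x) =
      t / c * (Real.log 2 * (relEntropy ρ σ).toReal) := by
    simp only [mul_left_comm _ γ, ← Finset.mul_sum, log_two_mul_relEntropy hρ.1.1 hσ.1 hsupp]
    field_simp
  rw [hmean, harg] at hmgf
  rw [sub_eq_add_neg, petzQuasi_one_add_eq_sum hρ.1 hσ hsupp]
  refine (Finset.sum_le_sum fun x _ => le_of_eq ?_).trans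
    (hmgf.trans (Real.exp_le_exp.2 (by linarith)))
  congr 2
  field_simp

end CGamma

section AsymptoticEquipartition

variable {N : Type} [Fintype N] [DecidableEq N] {ρ σ : Matrix N N ℂ} {ε γ s t : ℝ} {n : ℕ}

lemma relEntropy_sub_le_petzRenyi (hρ : IsState ρ) (hσ : σ.PosSemidef) (hγ : 0 < γ ∧ γ ≤ 1)
    (hsupp : SuppLE ρ σ) (ht : 0 < t ∧ t ≤ 1) :
    relEntropy ρ σ - (((cGamma γ ρ σ).toReal * t / (2 * Real.log 2) : ℝ) : EReal) ≤
      petzRenyi (1 - t / (cGamma γ ρ σ).toReal) ρ σ := by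
  set c := (cGamma γ ρ σ).toReal
  have hlog : 0 < Real.log 2 := Real.log_pos one_lt_two
  have hc : 0 < c := by linarith [eleven_div_seven_le_cGamma hρ hσ hsupp hγ]
  have hs : 0 < t / c := div_pos ht.1 hc
  have hQ := petzQuasi_pos hρ hσ hsupp (1 - t / c)
  have hle : Real.log (petzQuasi (1 - t / c) ρ σ) ≤
      -(t / c * (Real.log 2 * (relEntropy ρ σ).toReal)) + t ^ 2 / 2 :=
    (Real.log_le_iff_le_exp hQ).2 (petzQuasi_one_sub_le hρ hσ hγ hsupp ⟨ht.1.le, ht.2⟩)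
  rw [← coe_toReal_relEntropy hsupp, petzRenyi_eq (fun _ => hsupp) hQ, ← EReal.coe_sub,
    EReal.coe_le_coe_iff, sub_sub_cancel_left, inv_neg, neg_mul, le_neg, Real.logb,
    inv_mul_le_iff₀ hs, div_le_iff₀ hlog]
  refine hle.trans_eq ?_
  field_simp
  ring

lemma coe_sub_div_le_inv_mul {a b r : ℝ} {x : EReal} (hr : 0 < r)
    (h : ((r * a - b : ℝ) : EReal) ≤ x) :
    ((a - b / r : ℝ) : EReal) ≤ ((r⁻¹ : ℝ) : EReal) * x := by
  refine le_trans ?_ (mul_le_mul_of_nonneg_left h (EReal.coe_nonneg.2 (inv_nonneg.2 hr.le)))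
  rw [← EReal.coe_mul, mul_sub, inv_mul_cancel_left₀ hr.ne', div_eq_inv_mul]

lemma petzRenyi_sub_le_inv_mul_dMaxSmooth_tpowMat (hρ : IsState ρ) (hσ : σ.PosSemidef)
    (hsupp : SuppLE ρ σ) (hs : 0 < s) (hε : 0 < ε ∧ ε < 1) (hn : 1 ≤ n) :
    petzRenyi (1 - s) ρ σ - ((2 * (1 + s⁻¹) * Real.logb 2 (2 / (1 - ε)) / n : ℝ) : EReal) ≤
      (((n : ℝ)⁻¹ : ℝ) : EReal) * dMaxSmooth ε (tpowMat ρ n) (tpowMat σ n) := by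
  have hQ := petzQuasi_pos hρ hσ hsupp (1 - s)
  have hone_shot := petzRenyi_sub_le_dMaxSmooth (isState_tpowMat hρ n) (posSemidef_tpowMat hσ n)
    hs hε
  have hlt (h : 1 < 1 - s) (P : Prop) : P := absurd h (by linarith)
  rw [petzRenyi_eq (fun h => hlt h _) (by rw [petzQuasi_tpowMat _ hρ.1 hσ]; positivity),
    petzQuasi_tpowMat _ hρ.1 hσ, Real.logb_pow, mul_left_comm, ← EReal.coe_sub] at hone_shot
  rw [petzRenyi_eq (fun _ => hsupp) hQ, ← EReal.coe_sub]
  exact coe_sub_div_le_inv_mul (by positivity) hone_shot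

lemma one_le_logb_two_div_one_sub (hε : 0 < ε ∧ ε < 1) : 1 ≤ Real.logb 2 (2 / (1 - ε)) := by
  have h : 0 < 1 - ε := sub_pos.2 hε.2
  rw [Real.le_logb_iff_rpow_le one_lt_two (by positivity), Real.rpow_one, le_div_iff₀ h]
  linarith [hε.1]

lemma div_two_mul_log_two_add_le {r L : ℝ} (hr : 11 / 7 ≤ r) (hL : 1 ≤ L) :
    r / (2 * Real.log 2) + 2 * (1 + r) * L ≤ 4 * r * L := by
  have hlog : r / (2 * Real.log 2) ≤ r * (8 / 11) := by
    rw [div_eq_mul_inv]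
    gcongr
    rw [inv_le_comm₀ (by positivity) (by norm_num)]
    linarith [Real.log_two_gt_d9]
  nlinarith

lemma div_two_mul_log_two_add_div_le {c x L : ℝ} (hc : 11 / 7 ≤ c) (hx : 1 ≤ x) (hL : 1 ≤ L) :
    c * x⁻¹ / (2 * Real.log 2) + 2 * (1 + (x⁻¹ / c)⁻¹) * L / x ^ 2 ≤ 4 * c / x * L := by
  have h := div_le_div_of_nonneg_right
    (div_two_mul_log_two_add_le (hc.trans (le_mul_of_one_le_right (by linarith) hx)) hL)
    (sq_nonneg x)
  rw [inv_div, div_inv_eq_mul]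
  calc _ = (c * x / (2 * Real.log 2) + 2 * (1 + c * x) * L) / x ^ 2 := by field_simp
    _ ≤ 4 * (c * x) * L / x ^ 2 := h
    _ = _ := by field_simp

-- `D_{1-s}(ρ‖σ)` with `s = (c * √n)⁻¹` stays within `c / √n` of `D(ρ‖σ)` and the one-shot bound
-- loses `(1 + s⁻¹) / n`, so both errors are of order `c / √n`.
theorem dMaxSmooth_AEP_lower_general (ρ σ : Matrix N N ℂ) (hρ : IsState ρ) (hσ : σ.PosSemidef)
    (γ : ℝ) (hγ : 0 < γ ∧ γ ≤ 1) (hc : cGamma γ ρ σ < ⊤) (ε : ℝ) (hε : 0 < ε ∧ ε < 1)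
    (n : ℕ) (hn : 1 ≤ n) :
    relEntropy ρ σ -
        ((4 * (cGamma γ ρ σ).toReal / Real.sqrt n * Real.logb 2 (2 / (1 - ε)) : ℝ) : EReal) ≤
      (((n : ℝ)⁻¹ : ℝ) : EReal) * dMaxSmooth ε (tpowMat ρ n) (tpowMat σ n) := by
  have hsupp := suppLE_of_cGamma_lt_top hγ.1 hc
  set c := (cGamma γ ρ σ).toReal
  set L := Real.logb 2 (2 / (1 - ε))
  have hc_ge : 11 / 7 ≤ c := eleven_div_seven_le_cGamma hρ hσ hsupp hγ
  have hsqrt : 1 ≤ √(n : ℝ) := Real.one_le_sqrt.2 (Nat.one_le_cast.2 hn)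
  have ht : 0 < (√(n : ℝ))⁻¹ ∧ (√(n : ℝ))⁻¹ ≤ 1 := ⟨by positivity, inv_le_one_of_one_le₀ hsqrt⟩
  have herr := div_two_mul_log_two_add_div_le hc_ge hsqrt (one_le_logb_two_div_one_sub hε)
  rw [Real.sq_sqrt n.cast_nonneg] at herr
  calc _ ≤ relEntropy ρ σ - ((c * (√n)⁻¹ / (2 * Real.log 2) : ℝ) : EReal) -
        ((2 * (1 + ((√n)⁻¹ / c)⁻¹) * L / n : ℝ) : EReal) := by
        rw [← coe_toReal_relEntropy hsupp, ← EReal.coe_sub, ← EReal.coe_sub, ← EReal.coe_sub,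
          EReal.coe_le_coe_iff]
        linarith only [herr]
    _ ≤ petzRenyi (1 - (√n)⁻¹ / c) ρ σ - ((2 * (1 + ((√n)⁻¹ / c)⁻¹) * L / n : ℝ) : EReal) :=
        EReal.sub_le_sub (relEntropy_sub_le_petzRenyi hρ hσ hγ hsupp ht) le_rfl
    _ ≤ _ := petzRenyi_sub_le_inv_mul_dMaxSmooth_tpowMat hρ hσ hsupp
        (div_pos ht.1 (by linarith)) hε hn

end AsymptoticEquipartition

/-- Non-asymptotic AEP lower bound for the smoothed max-relative entropy. -/
theorem dMaxSmooth_AEP_lower {d : ℕ} (ρ σ : Matrix (Fin d) (Fin d) ℂ)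
    (hρ : IsState ρ) (hσ : IsState σ) (γ : ℝ) (hγ : 0 < γ ∧ γ ≤ 1)
    (hc : cGamma γ ρ σ < ⊤) (ε : ℝ) (hε : 0 < ε ∧ ε < 1) (n : ℕ) (hn : 1 ≤ n) :
    relEntropy ρ σ -
        ((4 * (cGamma γ ρ σ).toReal / Real.sqrt n * Real.logb 2 (2 / (1 - ε)) : ℝ) : EReal) ≤
      (((n : ℝ)⁻¹ : ℝ) : EReal) * dMaxSmooth ε (tpowMat ρ n) (tpowMat σ n) :=
  dMaxSmooth_AEP_lower_general ρ σ hρ hσ.1 γ hγ hc ε hε n hn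

end QCD
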